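/- Fix a model point w ∈ E, a step size γ̂ ≥ 0, a noise level α̂ ≥ 0, K ≥ 1 devices with batch sizes B k > 0 for k = 1,…,K, total batch size B_tot = Σ_k B k, and aggregation weights λ k = B k / B_tot. Let G k : Ω → E (k = 1,…,K) be Bochner-integrable random vectors with ∫ G k dμ = ∇L(w), with ω ↦ ‖G k ω‖² integrable and ∫ ‖G k ω − ∇L(w)‖² dμ ≤ α̂²/(B k) for each k, and let Ḡ ω = Σ_k λ k • G k ω denote the aggregated gradient estimate; assume ω ↦ L(w − γ̂ • Ḡ ω) is integrable. Then ∫ L(w − γ̂ • Ḡ ω) dμ(ω) − L(w) ≤ −γ̂·(1 − ρ̂·γ̂/2)·‖∇L(w)‖² + (ρ̂·γ̂²/2)·K·α̂²/B_tot. -/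

import Mathlib

open MeasureTheory
open scoped RealInnerProductSpace

/-!
Take expectations in the quadratic upper bound at `w` along the step `-γ • Ḡ`: since `Ḡ` is
unbiased, the linear term contributes `-γ ‖∇L w‖²`, and the second moment of `Ḡ` in the quadratic
term splits into `‖∇L w‖²` plus the variance of `Ḡ`. Convexity of `‖·‖²` takes the place of
independence of the devices: it bounds this variance by the weighted average of the individual
variances, to which, with weights `B i / ∑ j, B j`, each device contributes at most `α² / ∑ j, B j`.
-/

section Convexity

variable {ι E Ω : Type*} [NormedAddCommGroup E] [NormedSpace ℝ E]
  {s : Finset ι} {c : ι → ℝ}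

theorem norm_sum_smul_sq_le (hc : ∀ i ∈ s, 0 ≤ c i) (hc_sum : ∑ i ∈ s, c i = 1) (x : ι → E) :
    ‖∑ i ∈ s, c i • x i‖ ^ 2 ≤ ∑ i ∈ s, c i * ‖x i‖ ^ 2 :=
  (convexOn_univ_norm.pow (fun x _ => norm_nonneg x) 2).map_sum_le hc hc_sum
    fun _ _ => Set.mem_univ _

variable [MeasurableSpace Ω] {μ : Measure Ω}

theorem memLp_sum_smul {p : ENNReal} {X : ι → Ω → E} (hX : ∀ i ∈ s, MemLp (X i) p μ) :
    MemLp (fun ω => ∑ i ∈ s, c i • X i ω) p μ :=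
  memLp_finsetSum s fun i hi => (hX i hi).const_smul (c i)

theorem integral_norm_sum_smul_sq_le (hc : ∀ i ∈ s, 0 ≤ c i) (hc_sum : ∑ i ∈ s, c i = 1)
    {X : ι → Ω → E} (hX : ∀ i ∈ s, MemLp (X i) 2 μ) :
    ∫ ω, ‖∑ i ∈ s, c i • X i ω‖ ^ 2 ∂μ ≤ ∑ i ∈ s, c i * ∫ ω, ‖X i ω‖ ^ 2 ∂μ := by
  have hint : ∀ i ∈ s, Integrable (fun ω => c i * ‖X i ω‖ ^ 2) μ := fun i hi =>
    ((hX i hi).integrable_norm_pow two_ne_zero).const_mul (c i)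
  calc ∫ ω, ‖∑ i ∈ s, c i • X i ω‖ ^ 2 ∂μ
      ≤ ∫ ω, ∑ i ∈ s, c i * ‖X i ω‖ ^ 2 ∂μ :=
        integral_mono ((memLp_sum_smul hX).integrable_norm_pow two_ne_zero)
          (integrable_finsetSum s hint) fun ω => norm_sum_smul_sq_le hc hc_sum fun i => X i ω
    _ = ∑ i ∈ s, c i * ∫ ω, ‖X i ω‖ ^ 2 ∂μ := by
        simp only [integral_finsetSum s hint, integral_const_mul]

theorem integral_norm_sum_smul_sub_sq_le [IsFiniteMeasure μ] (hc : ∀ i ∈ s, 0 ≤ c i)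
    (hc_sum : ∑ i ∈ s, c i = 1) {X : ι → Ω → E} (hX : ∀ i ∈ s, MemLp (X i) 2 μ) (a : E) :
    ∫ ω, ‖∑ i ∈ s, c i • X i ω - a‖ ^ 2 ∂μ ≤ ∑ i ∈ s, c i * ∫ ω, ‖X i ω - a‖ ^ 2 ∂μ := by
  have hcenter : ∀ ω, ∑ i ∈ s, c i • X i ω - a = ∑ i ∈ s, c i • (X i ω - a) := fun ω => by
    simp only [smul_sub, Finset.sum_sub_distrib, ← Finset.sum_smul, hc_sum, one_smul]
  simp only [hcenter]
  exact integral_norm_sum_smul_sq_le hc hc_sum fun i hi => (hX i hi).sub (memLp_const a)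

theorem integral_sum_smul_of_integral_eq (hc_sum : ∑ i ∈ s, c i = 1) {X : ι → Ω → E}
    (hX : ∀ i ∈ s, Integrable (X i) μ) {a : E} (hmean : ∀ i ∈ s, ∫ ω, X i ω ∂μ = a) :
    ∫ ω, ∑ i ∈ s, c i • X i ω ∂μ = a :=
  calc ∫ ω, ∑ i ∈ s, c i • X i ω ∂μ
      = ∑ i ∈ s, ∫ ω, c i • X i ω ∂μ := integral_finsetSum s fun i hi => (hX i hi).smul (c i)
    _ = ∑ i ∈ s, c i • a :=
        Finset.sum_congr rfl fun i hi => by rw [integral_smul, hmean i hi]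
    _ = a := by rw [← Finset.sum_smul, hc_sum, one_smul]

end Convexity

section Descent

variable {E Ω : Type*} [NormedAddCommGroup E] [InnerProductSpace ℝ E] [CompleteSpace E]
  [MeasurableSpace Ω] {μ : Measure Ω} [IsProbabilityMeasure μ] {X : Ω → E}

theorem integral_norm_sub_integral_sq (hX : MemLp X 2 μ) :
    ∫ ω, ‖X ω - ∫ ω', X ω' ∂μ‖ ^ 2 ∂μ = ∫ ω, ‖X ω‖ ^ 2 ∂μ - ‖∫ ω, X ω ∂μ‖ ^ 2 := by
  set m := ∫ ω, X ω ∂μ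
  have hXint : Integrable X μ := hX.integrable one_le_two
  have hsq : Integrable (fun ω => ‖X ω‖ ^ 2) μ := hX.integrable_norm_pow two_ne_zero
  have hinner : Integrable (fun ω => 2 * ⟪m, X ω⟫) μ := (hXint.const_inner m).const_mul 2
  have hdiff : Integrable (fun ω => ‖X ω‖ ^ 2 - 2 * ⟪m, X ω⟫) μ := hsq.sub hinner
  calc ∫ ω, ‖X ω - m‖ ^ 2 ∂μ
      = ∫ ω, (‖X ω‖ ^ 2 - 2 * ⟪m, X ω⟫ + ‖m‖ ^ 2) ∂μ := by
        simp only [norm_sub_sq_real, real_inner_comm]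
    _ = ∫ ω, ‖X ω‖ ^ 2 ∂μ - 2 * ⟪m, m⟫ + ‖m‖ ^ 2 := by
        rw [integral_add hdiff (integrable_const _), integral_sub hsq hinner,
          integral_const_mul, integral_inner hXint, integral_const, probReal_univ, one_smul]
    _ = ∫ ω, ‖X ω‖ ^ 2 ∂μ - ‖m‖ ^ 2 := by
        rw [real_inner_self_eq_norm_sq]
        ring

variable {L : E → ℝ} {w g : E} {ρ γ : ℝ}

theorem integral_sub_le_of_quadratic_upper_bound
    (hL : ∀ u, L u ≤ L w + ⟪g, u - w⟫ + ρ / 2 * ‖u - w‖ ^ 2) (hX : MemLp X 2 μ)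
    (hLint : Integrable (fun ω => L (w - γ • X ω)) μ) :
    ∫ ω, L (w - γ • X ω) ∂μ - L w ≤
      -γ * ⟪g, ∫ ω, X ω ∂μ⟫ + ρ * γ ^ 2 / 2 * ∫ ω, ‖X ω‖ ^ 2 ∂μ := by
  have hstep : ∀ ω, L (w - γ • X ω) - L w ≤ -γ * ⟪g, X ω⟫ + ρ * γ ^ 2 / 2 * ‖X ω‖ ^ 2 := by
    intro ω
    have h := hL (w - γ • X ω)
    rw [sub_sub_cancel_left, inner_neg_right, real_inner_smul_right, norm_neg, norm_smul, mul_pow,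
      Real.norm_eq_abs, sq_abs] at h
    linarith
  have hXint : Integrable X μ := hX.integrable one_le_two
  have hlin : Integrable (fun ω => -γ * ⟪g, X ω⟫) μ := (hXint.const_inner g).const_mul (-γ)
  have hquad : Integrable (fun ω => ρ * γ ^ 2 / 2 * ‖X ω‖ ^ 2) μ :=
    (hX.integrable_norm_pow two_ne_zero).const_mul _
  calc ∫ ω, L (w - γ • X ω) ∂μ - L w
      = ∫ ω, (L (w - γ • X ω) - L w) ∂μ := by
        rw [integral_sub hLint (integrable_const _), integral_const, probReal_univ, one_smul]
    _ ≤ ∫ ω, (-γ * ⟪g, X ω⟫ + ρ * γ ^ 2 / 2 * ‖X ω‖ ^ 2) ∂μ :=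
        integral_mono (hLint.sub (integrable_const _)) (hlin.add hquad) hstep
    _ = -γ * ⟪g, ∫ ω, X ω ∂μ⟫ + ρ * γ ^ 2 / 2 * ∫ ω, ‖X ω‖ ^ 2 ∂μ := by
        rw [integral_add hlin hquad, integral_const_mul, integral_const_mul, integral_inner hXint]

theorem integral_sub_le_of_quadratic_upper_bound_of_integral_eq
    (hL : ∀ u, L u ≤ L w + ⟪g, u - w⟫ + ρ / 2 * ‖u - w‖ ^ 2) (hX : MemLp X 2 μ)
    (hmean : ∫ ω, X ω ∂μ = g) (hLint : Integrable (fun ω => L (w - γ • X ω)) μ) :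
    ∫ ω, L (w - γ • X ω) ∂μ - L w ≤
      -γ * (1 - ρ * γ / 2) * ‖g‖ ^ 2 + ρ * γ ^ 2 / 2 * ∫ ω, ‖X ω - g‖ ^ 2 ∂μ := by
  have hdescent := integral_sub_le_of_quadratic_upper_bound hL hX hLint
  have hvariance := integral_norm_sub_integral_sq hX
  rw [hmean, real_inner_self_eq_norm_sq] at hdescent
  rw [hmean] at hvariance
  rw [hvariance]
  linarith

end Descent

theorem sum_div_sum_mul_div {ι 𝕜 : Type*} [Semifield 𝕜] {s : Finset ι} {B : ι → 𝕜}
    (hB : ∀ i ∈ s, B i ≠ 0) (a : 𝕜) :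
    ∑ i ∈ s, B i / (∑ j ∈ s, B j) * (a / B i) = s.card * a / ∑ i ∈ s, B i := by
  rw [Finset.sum_congr rfl fun i hi => div_mul_div_cancel₀' (hB i hi) _ _, Finset.sum_const,
    nsmul_eq_mul, mul_div_assoc]

theorem federated_one_round_expected_descent_general
    {ι E Ω : Type*} [Fintype ι] [Nonempty ι]
    [NormedAddCommGroup E] [InnerProductSpace ℝ E] [CompleteSpace E]
    [MeasurableSpace Ω] {μ : Measure Ω} [IsProbabilityMeasure μ]
    {L : E → ℝ} {w g : E} {ρ γ α : ℝ} (hρ : 0 ≤ ρ)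
    (hL : ∀ u, L u ≤ L w + ⟪g, u - w⟫ + ρ / 2 * ‖u - w‖ ^ 2)
    {B : ι → ℝ} (hB : ∀ i, 0 < B i) {G : ι → Ω → E} (hG : ∀ i, MemLp (G i) 2 μ)
    (hmean : ∀ i, ∫ ω, G i ω ∂μ = g)
    (hvar : ∀ i, ∫ ω, ‖G i ω - g‖ ^ 2 ∂μ ≤ α ^ 2 / B i)
    (hLint : Integrable (fun ω => L (w - γ • ∑ i, (B i / ∑ j, B j) • G i ω)) μ) :
    ∫ ω, L (w - γ • ∑ i, (B i / ∑ j, B j) • G i ω) ∂μ - L w ≤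
      -γ * (1 - ρ * γ / 2) * ‖g‖ ^ 2 +
        ρ * γ ^ 2 / 2 * (Fintype.card ι * α ^ 2 / ∑ i, B i) := by
  have hB_sum : 0 < ∑ j, B j := Finset.sum_pos (fun i _ => hB i) Finset.univ_nonempty
  have hweight : ∀ i ∈ Finset.univ, 0 ≤ B i / ∑ j, B j := fun i _ => (div_pos (hB i) hB_sum).le
  have hweight_sum : ∑ i, B i / ∑ j, B j = 1 := by
    rw [← Finset.sum_div, div_self hB_sum.ne']
  have hvariance : ∫ ω, ‖∑ i, (B i / ∑ j, B j) • G i ω - g‖ ^ 2 ∂μ ≤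
      Fintype.card ι * α ^ 2 / ∑ i, B i :=
    calc ∫ ω, ‖∑ i, (B i / ∑ j, B j) • G i ω - g‖ ^ 2 ∂μ
        ≤ ∑ i, B i / (∑ j, B j) * ∫ ω, ‖G i ω - g‖ ^ 2 ∂μ :=
          integral_norm_sum_smul_sub_sq_le hweight hweight_sum (fun i _ => hG i) g
      _ ≤ ∑ i, B i / (∑ j, B j) * (α ^ 2 / B i) :=
          Finset.sum_le_sum fun i hi => mul_le_mul_of_nonneg_left (hvar i) (hweight i hi)
      _ = Fintype.card ι * α ^ 2 / ∑ i, B i := sum_div_sum_mul_div (fun i _ => (hB i).ne') _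
  refine (integral_sub_le_of_quadratic_upper_bound_of_integral_eq hL
    (memLp_sum_smul fun i _ => hG i) (integral_sum_smul_of_integral_eq hweight_sum
      (fun i _ => (hG i).integrable one_le_two) fun i _ => hmean i) hLint).trans ?_
  gcongr

/-- One-round expected loss decrease of federated SGD with K devices whose
mini-batch gradient estimates are aggregated with weights proportional to
their batch sizes. -/
theorem federated_one_round_expected_descent
    {E : Type*} [NormedAddCommGroup E] [InnerProductSpace ℝ E] [CompleteSpace E]
    {Ω : Type*} [MeasurableSpace Ω] (μ : Measure Ω) [IsProbabilityMeasure μ]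
    (L : E → ℝ) (gradL : E → E) (ρhat : ℝ) (hρhat : 0 ≤ ρhat)
    (hsmooth : ∀ u v : E, L u ≤ L v + ⟪gradL v, u - v⟫ + ρhat / 2 * ‖u - v‖ ^ 2)
    (w : E) (γhat αhat : ℝ) (hγ : 0 ≤ γhat) (hα : 0 ≤ αhat)
    (K : ℕ) (hK : 1 ≤ K) (B : Fin K → ℝ) (hB : ∀ k, 0 < B k)
    (G : Fin K → Ω → E) (hGint : ∀ k, Integrable (G k) μ)
    (hunbiased : ∀ k, ∫ ω, G k ω ∂μ = gradL w)
    (hG2 : ∀ k, Integrable (fun ω => ‖G k ω‖ ^ 2) μ)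
    (hvar : ∀ k, ∫ ω, ‖G k ω - gradL w‖ ^ 2 ∂μ ≤ αhat ^ 2 / B k)
    (hLint : Integrable
      (fun ω => L (w - γhat • ∑ k, (B k / ∑ j, B j) • G k ω)) μ) :
    (∫ ω, L (w - γhat • ∑ k, (B k / ∑ j, B j) • G k ω) ∂μ) - L w ≤
      -γhat * (1 - ρhat * γhat / 2) * ‖gradL w‖ ^ 2 +
        ρhat * γhat ^ 2 / 2 * (K * αhat ^ 2 / ∑ k, B k) := by
  have : Nonempty (Fin K) := ⟨⟨0, hK⟩⟩
  simpa only [Fintype.card_fin] using federated_one_round_expected_descent_general hρhat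
    (hsmooth · w) hB (fun k => (memLp_two_iff_integrable_sq_norm (hGint k).1).2 (hG2 k))
    hunbiased hvar hLint
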